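/- Let K ≥ 3 and let x^{(0)} := (1, 1/8, 3/4, 1, 1, …, 1) ∈ ℝ^K. Let x^{(1)} be the point obtained from x^{(0)} by one full cycle of exact cyclic coordinate minimization of g (coordinates updated in the order 1, 2, …, K, each coordinate set to the unique minimizer of g with all other coordinates fixed at their most recent values). Then g(x^{(1)}) ≥ (9(K−3)/(4(K−1))) · ‖x^{(0)}‖². In particular, since min g = 0 (attained at x* = 0), the optimality gap after one cycle of cyclic BCD satisfies Δ^{(1)} ≥ (9(K−3)/(4(K−1))) · ‖x^{(0)} − x*‖². -/

import Mathlib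

open Finset

/-- Squared Euclidean norm of a vector in `ℝ^n`. -/
noncomputable def sqnorm {n : ℕ} (v : Fin n → ℝ) : ℝ := ∑ i, v i ^ 2

/-- The `K × K` tridiagonal Toeplitz matrix with `A_{ij} = 1` iff `|i − j| ≤ 1`. -/
def triA (K : ℕ) : Matrix (Fin K) (Fin K) ℝ :=
  Matrix.of fun i j => if (i : ℕ) ≤ (j : ℕ) + 1 ∧ (j : ℕ) ≤ (i : ℕ) + 1 then 1 else 0

/-- The objective `g(x) = ‖Ax‖²` for the tridiagonal example. -/
noncomputable def gT {K : ℕ} (x : Fin K → ℝ) : ℝ := sqnorm ((triA K).mulVec x)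

/-- The initial point `x^{(0)} = (1, 1/8, 3/4, 1, 1, …, 1)`. -/
noncomputable def xinit (K : ℕ) : Fin K → ℝ := fun k =>
  if (k : ℕ) = 1 then 1 / 8 else if (k : ℕ) = 2 then 3 / 4 else 1

/-- Intermediate point during the cycle updating coordinate `k`: coordinates
`j < k` take their new values from `x1`, coordinate `k` is the free variable `t`,
and coordinates `j > k` keep their old values from `x0`. -/
def midpt {K : ℕ} (x0 x1 : Fin K → ℝ) (k : Fin K) (t : ℝ) : Fin K → ℝ :=
  fun j => if j < k then x1 j else if j = k then t else x0 j

/-- `x1` is obtained from `x0` by one full cycle of exact cyclic coordinate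
minimization of `g` (coordinates in the order `1, 2, …, K`, each coordinate set
to the minimizer of `g` with all other coordinates fixed at their most recent
values). -/
def ExactCoordCycle {K : ℕ} (x0 x1 : Fin K → ℝ) : Prop :=
  ∀ (k : Fin K) (t : ℝ), gT (midpt x0 x1 k (x1 k)) ≤ gT (midpt x0 x1 k t)

/-!
Since `A` is symmetric, the `k`-th update makes the `k`-th entry of `A (A x)` vanish at the current
iterate. This is the linear recurrence
`x_{k-2} + 2 x_{k-1} + 3 x_k + 2 y_{k+1} + y_{k+2} = 0`, truncated at both ends, between the new
coordinates `x` and the old ones `y`. The entries `1/8` and `3/4` of the starting point are chosen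
so that the first two updates already land on `-1/2`, the constant solution for `y = 1`. All new
coordinates but the last two are therefore `-1/2`, and for `K ≥ 4` each of the rows
`2, …, K - 3` of `A` contributes `(3/2)^2 = 9/4` to the objective. The four remaining rows together
contribute more than `9/4`, so `g(x^{(1)}) ≥ 9 (K - 3) / 4`, whereas `‖x^{(0)}‖² ≤ K - 1`.
-/

open scoped Matrix

theorem dotProduct_eq_zero_of_forall_le_add_smul {ι R : Type*} [Fintype ι] [Field R]
    [LinearOrder R] [IsStrictOrderedRing R] {u v : ι → R}
    (h : ∀ s : R, u ⬝ᵥ u ≤ (u + s • v) ⬝ᵥ (u + s • v)) : v ⬝ᵥ u = 0 := by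
  have hquad : ∀ s : R, 0 ≤ (v ⬝ᵥ v) * (s * s) + 2 * (v ⬝ᵥ u) * s + 0 := fun s => by
    have hs := h s
    simp only [add_dotProduct, dotProduct_add, smul_dotProduct, dotProduct_smul, smul_eq_mul,
      dotProduct_comm u v] at hs
    linarith
  have hdiscrim := discrim_le_zero hquad
  simp only [discrim, mul_zero, sub_zero] at hdiscrim
  simpa using (sq_nonpos_iff _).mp hdiscrim

section ZeroPad

variable {K : ℕ} {M : Type*}

/-- The vector `(y₁, …, y_K)` with the paper's indexing from `1`, extended by zero to all of `ℕ`.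
The padding lets the rows of a tridiagonal matrix be written without case distinctions at the two
ends. -/
def zeroPad [Zero M] (y : Fin K → M) : ℕ → M
  | 0 => 0
  | n + 1 => if h : n < K then y ⟨n, h⟩ else 0

theorem zeroPad_zero [Zero M] (y : Fin K → M) : zeroPad y 0 = 0 := rfl

theorem zeroPad_succ [Zero M] (y : Fin K → M) {n : ℕ} (h : n < K) :
    zeroPad y (n + 1) = y ⟨n, h⟩ :=
  dif_pos h

theorem zeroPad_of_lt [Zero M] (y : Fin K → M) {n : ℕ} (h : K < n) : zeroPad y n = 0 := by
  cases n with
  | zero => rfl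
  | succ n => exact dif_neg (by omega)

theorem sum_ite_val_add_one_eq_zeroPad [AddCommMonoid M] (y : Fin K → M) (n : ℕ) :
    ∑ j : Fin K, (if (j : ℕ) + 1 = n then y j else 0) = zeroPad y n := by
  cases n with
  | zero => simp [zeroPad_zero]
  | succ n =>
    by_cases h : n < K
    · rw [zeroPad_succ y h, sum_eq_single ⟨n, h⟩] <;> simp +contextual [Fin.ext_iff]
    · rw [zeroPad_of_lt y (by omega)]
      exact sum_eq_zero fun j _ => if_neg (by omega)

end ZeroPad

section Objective

variable {K : ℕ}

theorem sqnorm_eq_dotProduct (v : Fin K → ℝ) : sqnorm v = v ⬝ᵥ v := by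
  simp only [sqnorm, dotProduct, sq]

theorem sqnorm_nonneg (v : Fin K → ℝ) : 0 ≤ sqnorm v :=
  sum_nonneg fun i _ => sq_nonneg (v i)

theorem triA_mulVec_apply (y : Fin K → ℝ) (k : Fin K) :
    (triA K *ᵥ y) k = zeroPad y k + zeroPad y (k + 1) + zeroPad y (k + 2) := by
  simp only [Matrix.mulVec, dotProduct, triA, Matrix.of_apply, ← sum_ite_val_add_one_eq_zeroPad,
    ← sum_add_distrib]
  refine sum_congr rfl fun j _ => ?_
  split_ifs <;> first | omega | simp

theorem isSymm_triA : (triA K).IsSymm :=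
  Matrix.IsSymm.ext fun i j => by simp only [triA, Matrix.of_apply, and_comm]

theorem zeroPad_triA_mulVec_succ (y : Fin K → ℝ) {n : ℕ} (h : n < K) :
    zeroPad (triA K *ᵥ y) (n + 1) = zeroPad y n + zeroPad y (n + 1) + zeroPad y (n + 2) := by
  rw [zeroPad_succ _ h, triA_mulVec_apply]

theorem gT_zero : gT (0 : Fin K → ℝ) = 0 := by simp [gT, sqnorm]

theorem gT_nonneg (x : Fin K → ℝ) : 0 ≤ gT x := sqnorm_nonneg _

theorem gT_eq_sum_range (x : Fin K → ℝ) :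
    gT x = ∑ i ∈ range K, (zeroPad x i + zeroPad x (i + 1) + zeroPad x (i + 2)) ^ 2 := by
  simp only [gT, sqnorm, triA_mulVec_apply, sum_range]

end Objective

section Cycle

variable {K : ℕ} (x0 x1 : Fin K → ℝ)

theorem midpt_add (k : Fin K) (t s : ℝ) :
    midpt x0 x1 k (t + s) = midpt x0 x1 k t + s • Pi.single k 1 := by
  ext j
  rcases lt_trichotomy j k with hj | rfl | hj
  · simp [midpt, hj, hj.ne]
  · simp [midpt]
  · simp [midpt, hj.not_gt, hj.ne']

theorem zeroPad_midpt_of_le {i n : ℕ} (hi : i < K) (hn : n ≤ i + 1) :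
    zeroPad (midpt x0 x1 ⟨i, hi⟩ (x1 ⟨i, hi⟩)) n = zeroPad x1 n := by
  cases n with
  | zero => rfl
  | succ n =>
    have hnK : n < K := by omega
    rw [zeroPad_succ _ hnK, zeroPad_succ _ hnK]
    rcases (Nat.le_of_succ_le_succ hn).lt_or_eq with h | rfl
    · exact if_pos h
    · simp [midpt]

theorem zeroPad_midpt_of_lt {i n : ℕ} (hi : i < K) (t : ℝ) (hn : i + 1 < n) :
    zeroPad (midpt x0 x1 ⟨i, hi⟩ t) n = zeroPad x0 n := by
  cases n with
  | zero => rfl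
  | succ n =>
    by_cases hnK : n < K
    · have hin : i < n := Nat.lt_of_succ_lt_succ hn
      simp [zeroPad_succ _ hnK, midpt, hin.not_gt, hin.ne']
    · rw [zeroPad_of_lt _ (by omega), zeroPad_of_lt _ (by omega)]

end Cycle

namespace ExactCoordCycle

theorem mulVec_mulVec_midpt_eq_zero {K : ℕ} {x0 x1 : Fin K → ℝ} (h : ExactCoordCycle x0 x1)
    (k : Fin K) : (triA K *ᵥ (triA K *ᵥ midpt x0 x1 k (x1 k))) k = 0 := by
  have hcol : triA K k = triA K *ᵥ Pi.single k 1 := by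
    rw [Matrix.mulVec_single_one]
    exact funext fun i => isSymm_triA.apply i k
  change triA K k ⬝ᵥ _ = 0
  rw [hcol]
  refine dotProduct_eq_zero_of_forall_le_add_smul fun s => ?_
  simpa only [gT, sqnorm_eq_dotProduct, midpt_add, Matrix.mulVec_add, Matrix.mulVec_smul]
    using h k (x1 k + s)

theorem first_recurrence {K : ℕ} {x0 x1 : Fin K → ℝ} (h : ExactCoordCycle x0 x1) (hK : 2 ≤ K) :
    2 * zeroPad x1 1 + 2 * zeroPad x0 2 + zeroPad x0 3 = 0 := by
  have hstat := h.mulVec_mulVec_midpt_eq_zero ⟨0, by omega⟩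
  simp only [triA_mulVec_apply, zeroPad_zero] at hstat
  rw [zeroPad_triA_mulVec_succ _ (by omega), zeroPad_triA_mulVec_succ _ (by omega), zeroPad_zero,
    zeroPad_midpt_of_le _ _ _ (by omega), zeroPad_midpt_of_lt _ _ _ _ (by omega),
    zeroPad_midpt_of_lt _ _ _ _ (by omega)] at hstat
  linarith

theorem recurrence {K n : ℕ} {x0 x1 : Fin K → ℝ} (h : ExactCoordCycle x0 x1) (hn : n + 2 < K) :
    zeroPad x1 n + 2 * zeroPad x1 (n + 1) + 3 * zeroPad x1 (n + 2) + 2 * zeroPad x0 (n + 3)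
      + zeroPad x0 (n + 4) = 0 := by
  have hstat := h.mulVec_mulVec_midpt_eq_zero ⟨n + 1, by omega⟩
  simp only [triA_mulVec_apply] at hstat
  rw [zeroPad_triA_mulVec_succ _ (by omega), zeroPad_triA_mulVec_succ _ (by omega),
    zeroPad_triA_mulVec_succ _ (by omega), zeroPad_midpt_of_le _ _ _ (by omega),
    zeroPad_midpt_of_le _ _ _ (by omega), zeroPad_midpt_of_le _ _ _ (by omega),
    zeroPad_midpt_of_lt _ _ _ _ (by omega), zeroPad_midpt_of_lt _ _ _ _ (by omega)] at hstat
  linarith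

theorem last_recurrence {n : ℕ} {x0 x1 : Fin (n + 2) → ℝ} (h : ExactCoordCycle x0 x1) :
    zeroPad x1 n + 2 * zeroPad x1 (n + 1) + 2 * zeroPad x1 (n + 2) = 0 := by
  have hstat := h.mulVec_mulVec_midpt_eq_zero ⟨n + 1, by omega⟩
  simp only [triA_mulVec_apply] at hstat
  rw [zeroPad_triA_mulVec_succ _ (by omega), zeroPad_triA_mulVec_succ _ (by omega),
    zeroPad_of_lt (_ *ᵥ _) (by omega), zeroPad_midpt_of_le _ _ _ (by omega),
    zeroPad_midpt_of_le _ _ _ (by omega), zeroPad_midpt_of_le _ _ _ (by omega),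
    zeroPad_of_lt (midpt _ _ _ _) (by omega)] at hstat
  linarith

end ExactCoordCycle

section InitialPoint

variable {K : ℕ}

theorem zeroPad_xinit_two (hK : 2 ≤ K) : zeroPad (xinit K) 2 = 1 / 8 := by
  rw [zeroPad_succ _ (by omega)]
  simp [xinit]

theorem zeroPad_xinit_three (hK : 3 ≤ K) : zeroPad (xinit K) 3 = 3 / 4 := by
  rw [zeroPad_succ _ (by omega)]
  simp [xinit]

theorem zeroPad_xinit_add_four {n : ℕ} (hn : n + 4 ≤ K) : zeroPad (xinit K) (n + 4) = 1 := by
  rw [zeroPad_succ _ (by omega)]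
  simp [xinit]

theorem sqnorm_xinit (hK : 3 ≤ K) : sqnorm (xinit K) = K - 91 / 64 := by
  obtain ⟨n, rfl⟩ := Nat.exists_eq_add_of_le' hK
  have htail (i : Fin n) : xinit (n + 3) i.succ.succ.succ = 1 := by simp [xinit]
  simp only [sqnorm, Fin.sum_univ_succ, htail]
  simp only [xinit, Fin.val_succ, Fin.val_zero]
  norm_num
  ring

end InitialPoint

namespace ExactCoordCycle

theorem zeroPad_succ_eq_neg_half {K n : ℕ} {x1 : Fin K → ℝ} (h : ExactCoordCycle (xinit K) x1)
    (hn : n + 2 < K) : zeroPad x1 (n + 1) = -1 / 2 := by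
  induction n using Nat.strong_induction_on with
  | _ n ih =>
    match n with
    | 0 =>
      have hrec := h.first_recurrence (by omega)
      rw [zeroPad_xinit_two (by omega), zeroPad_xinit_three (by omega)] at hrec
      linarith
    | 1 =>
      have hrec := h.recurrence (n := 0) (by omega)
      rw [zeroPad_zero, ih 0 (by omega) (by omega), zeroPad_xinit_three (by omega),
        zeroPad_xinit_add_four (by omega)] at hrec
      linarith
    | m + 2 =>
      have hrec := h.recurrence (n := m + 1) (by omega)
      rw [ih m (by omega) (by omega), ih (m + 1) (by omega) (by omega),
        zeroPad_xinit_add_four (by omega), zeroPad_xinit_add_four (n := m + 1) (by omega)] at hrec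
      linarith

theorem zeroPad_penultimate_eq {n : ℕ} {x1 : Fin (n + 4) → ℝ}
    (h : ExactCoordCycle (xinit (n + 4)) x1) : zeroPad x1 (n + 3) = -1 / 6 := by
  have hrec := h.recurrence (n := n + 1) (by omega)
  rw [h.zeroPad_succ_eq_neg_half (by omega), h.zeroPad_succ_eq_neg_half (n := n + 1) (by omega),
    zeroPad_xinit_add_four le_rfl, zeroPad_of_lt (xinit _) (by omega)] at hrec
  linarith

theorem zeroPad_last_eq {n : ℕ} {x1 : Fin (n + 4) → ℝ}
    (h : ExactCoordCycle (xinit (n + 4)) x1) : zeroPad x1 (n + 4) = 5 / 12 := by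
  have hrec := h.last_recurrence
  rw [h.zeroPad_succ_eq_neg_half (n := n + 1) (by omega), h.zeroPad_penultimate_eq] at hrec
  linarith

theorem gT_eq_of_xinit {K : ℕ} {x1 : Fin K → ℝ} (h : ExactCoordCycle (xinit K) x1) (hK : 4 ≤ K) :
    gT x1 = 9 / 4 * (K - 4) + 179 / 72 := by
  obtain ⟨n, rfl⟩ := Nat.exists_eq_add_of_le' hK
  have hbulk {i : ℕ} (hi : i < n + 2) : zeroPad x1 (i + 1) = -1 / 2 :=
    h.zeroPad_succ_eq_neg_half (by omega)
  have hrows : ∑ i ∈ range n,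
      (zeroPad x1 (i + 1) + zeroPad x1 (i + 2) + zeroPad x1 (i + 3)) ^ 2 = n * (9 / 4) := by
    rw [sum_congr rfl (g := fun _ => 9 / 4), sum_const, card_range, nsmul_eq_mul]
    intro i hi
    rw [mem_range] at hi
    rw [hbulk (by omega), hbulk (i := i + 1) (by omega), hbulk (i := i + 2) (by omega)]
    norm_num
  rw [gT_eq_sum_range, sum_range_succ, sum_range_succ, sum_range_succ, sum_range_succ', hrows,
    zeroPad_zero, hbulk (i := 0) (by omega), hbulk (i := 1) (by omega), hbulk (i := n) (by omega),
    hbulk (i := n + 1) (by omega), h.zeroPad_penultimate_eq, h.zeroPad_last_eq,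
    zeroPad_of_lt x1 (by omega)]
  push_cast
  ring

theorem le_gT_of_xinit {K : ℕ} {x1 : Fin K → ℝ} (h : ExactCoordCycle (xinit K) x1) (hK : 3 ≤ K) :
    9 / 4 * ((K : ℝ) - 3) ≤ gT x1 := by
  rcases hK.eq_or_lt with rfl | hK
  · simpa using gT_nonneg x1
  · linarith [h.gT_eq_of_xinit hK]

end ExactCoordCycle

/-- tightness result: after one cycle of exact cyclic
coordinate minimization on `g(x) = ‖Ax‖²` from `x^{(0)} = (1,1/8,3/4,1,…,1)`,
the optimality gap satisfies `Δ^{(1)} = g(x^{(1)}) − 0 ≥ (9(K−3)/(4(K−1))) ‖x^{(0)} − x*‖²`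
where `x* = 0` is a minimizer of `g` with `g(x*) = 0`. -/
theorem bcd_one_cycle_lower_bound {K : ℕ} (hK : 3 ≤ K)
    (x1 : Fin K → ℝ) (hcycle : ExactCoordCycle (xinit K) x1) :
    9 * ((K : ℝ) - 3) / (4 * ((K : ℝ) - 1)) * sqnorm (xinit K - 0) ≤ gT x1 - gT (0 : Fin K → ℝ) := by
  have hK' : (3 : ℝ) ≤ K := mod_cast hK
  rw [gT_zero, sub_zero, sub_zero]
  calc 9 * ((K : ℝ) - 3) / (4 * ((K : ℝ) - 1)) * sqnorm (xinit K)
      ≤ 9 * ((K : ℝ) - 3) / (4 * ((K : ℝ) - 1)) * (K - 1) := by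
        gcongr
        · exact div_nonneg (by linarith) (by linarith)
        · linarith [sqnorm_xinit hK]
    _ = 9 / 4 * ((K : ℝ) - 3) := by
        field_simp [show (K : ℝ) - 1 ≠ 0 by linarith]
    _ ≤ gT x1 := hcycle.le_gT_of_xinit hK
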